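/- In the twin prime power construction, define A_0 := I_{(q+2)q²}, A_1 := (J_{q+2} − I_{q+2}) ⊗ I_{q²}, A_2 := I_{q+2} ⊗ (J_{q²} − I_{q²}), and A_{3,β} := N_β − A_1 for each nonzero β ∈ K. Then these q+4 matrices form a commutative association scheme with q+3 classes; explicitly: (1) every entry of each of these matrices is 0 or 1; (2) their sum equals J_{(q+2)q²}; (3) A_0, A_1, A_2 are symmetric and A_{3,β}^⊤ = A_{3,−β} for each nonzero β; (4) the product of any two matrices in the family lies in the ℝ-linear span of the family; (5) any two matrices in the family commute. -/

import Mathlib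

open Matrix Kronecker BigOperators

noncomputable section

/-- The all-ones matrix. -/
def allOnes (n : Type*) : Matrix n n ℝ := Matrix.of fun _ _ => 1

/-- The auxiliary matrices `C_a` for `a ∈ F ∪ {y}` (formally `Option F`, with `none`
playing the role of the extra symbol `y`, so that `C_y = I_q ⊗ J_q`). -/
def auxC {F : Type*} [Field F] [Fintype F] [DecidableEq F] :
    Option F → Matrix (F × F) (F × F) ℝ
  | some α => Matrix.of fun p r => if r.2 - p.2 = α * (r.1 - p.1) then 1 else 0
  | none => Matrix.of fun p r => if p.1 = r.1 then 1 else 0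

/-- The permutation matrix `P_{β,γ}` with `(a,b)`-entry `1` iff `β·(−a+b) = γ`. -/
def permP {K : Type*} [Field K] [DecidableEq K] (β γ : K) : Matrix K K ℝ :=
  Matrix.of fun a b => if β * (-a + b) = γ then 1 else 0

/-- The matrix `N_β = Σ_{γ∈K∖{0}} P_{β,γ} ⊗ C_{ψ(γ)}` of the twin prime power
construction, where `ψ : K∖{0} → F ∪ {y}` is a fixed bijection. -/
def NN {F K : Type*} [Field F] [Fintype F] [DecidableEq F]
    [Field K] [Fintype K] [DecidableEq K]
    (ψ : {x : K // x ≠ 0} ≃ Option F) (β : K) :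
    Matrix (K × (F × F)) (K × (F × F)) ℝ :=
  ∑ γ : {x : K // x ≠ 0}, permP β (γ : K) ⊗ₖ auxC (ψ γ)

/-- The family of adjacency matrices `A_0, A_1, A_2, A_{3,β}` (`β ∈ K∖{0}`) of the
association scheme obtained from twin prime powers: `A_0 = I`,
`A_1 = (J_{q+2} − I_{q+2}) ⊗ I_{q²}`, `A_2 = I_{q+2} ⊗ (J_{q²} − I_{q²})`, and
`A_{3,β} = N_β − A_1`. -/
def twinA {F K : Type*} [Field F] [Fintype F] [DecidableEq F]
    [Field K] [Fintype K] [DecidableEq K]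
    (ψ : {x : K // x ≠ 0} ≃ Option F) :
    (Fin 3 ⊕ {x : K // x ≠ 0}) → Matrix (K × (F × F)) (K × (F × F)) ℝ
  | Sum.inl i =>
      if i = 0 then 1
      else if i = 1 then (allOnes K - 1) ⊗ₖ (1 : Matrix (F × F) (F × F) ℝ)
      else (1 : Matrix K K ℝ) ⊗ₖ (allOnes (F × F) - 1)
  | Sum.inr β => NN ψ (β : K) - (allOnes K - 1) ⊗ₖ (1 : Matrix (F × F) (F × F) ℝ)

set_option linter.unusedSectionVars false

section helpers

lemma fin3 (i : Fin 3) : i = 0 ∨ i = 1 ∨ i = 2 := by revert i; decide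

variable {F K : Type*} [Field F] [Fintype F] [DecidableEq F]
    [Field K] [Fintype K] [DecidableEq K]

lemma sum_ite_lin {R : Type*} [Field R] [Fintype R] [DecidableEq R] (P : R → Prop)
    [DecidablePred P] (z0 : R) (hP : ∀ z, P z ↔ z = z0) :
    (∑ z, if P z then (1 : ℝ) else 0) = 1 := by
  simp [hP]

lemma auxC_self (a : Option F) (x : F × F) : auxC a x x = 1 := by
  cases a <;> simp [auxC]

lemma auxC_01 (a : Option F) (x y : F × F) : auxC a x y = 0 ∨ auxC a x y = 1 := by
  cases a <;> simp only [auxC, Matrix.of_apply] <;> split_ifs <;> simp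

lemma auxC_symm (a : Option F) (x y : F × F) : auxC a x y = auxC a y x := by
  cases a with
  | none => simp [auxC, eq_comm]
  | some α =>
    simp only [auxC, Matrix.of_apply]
    congr 1
    rw [eq_iff_iff]
    constructor <;> intro h <;> linear_combination -h

lemma auxC_mul (a b : Option F) :
    auxC a * auxC b = if a = b then (Fintype.card F : ℝ) • auxC a else allOnes (F × F) := by
  ext ⟨x1, x2⟩ ⟨y1, y2⟩
  rw [Matrix.mul_apply, Fintype.sum_prod_type]
  rcases a with _ | α <;> rcases b with _ | α'
  · simp only [auxC, Matrix.of_apply, if_true, Matrix.smul_apply, smul_eq_mul]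
    by_cases h : x1 = y1
    · subst h
      rw [Finset.sum_eq_single x1]
      · simp
      · intro b _ hb; simp [hb]
      · simp
    · rw [if_neg h, mul_zero]
      refine Finset.sum_eq_zero fun z _ => Finset.sum_eq_zero fun w _ => ?_
      by_cases h1 : x1 = z
      · subst h1; simp [h]
      · simp [h1]
  · simp only [auxC, Matrix.of_apply, reduceCtorEq, if_false, allOnes]
    simp only [ite_mul, one_mul, zero_mul]
    rw [Finset.sum_eq_single x1]
    · simp only [if_true]
      refine sum_ite_lin _ (y2 - α' * (y1 - x1)) fun z => ?_
      constructor <;> intro h <;> linear_combination -h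
    · intro b _ hb; simp [hb.symm]
    · simp
  · simp only [auxC, Matrix.of_apply, reduceCtorEq, if_false, allOnes]
    rw [Finset.sum_eq_single y1]
    · simp only [if_true, mul_one]
      refine sum_ite_lin _ (x2 + α * (y1 - x1)) fun z => ?_
      constructor <;> intro h <;> linear_combination h
    · intro b _ hb; simp [hb]
    · simp
  · have key : ∀ z1 : F, (∑ z2 : F, auxC (some α) (x1, x2) (z1, z2) *
        auxC (some α') (z1, z2) (y1, y2)) =
        if y2 - x2 - α * (z1 - x1) = α' * (y1 - z1) then (1 : ℝ) else 0 := by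
      intro z1
      rw [Finset.sum_eq_single (x2 + α * (z1 - x1))]
      · simp only [auxC, Matrix.of_apply, add_sub_cancel_left, if_true, one_mul, sub_add_eq_sub_sub]
      · intro z2 _ hz
        have : ¬ (z2 - x2 = α * (z1 - x1)) := fun h => hz (by linear_combination h)
        simp [auxC, this]
      · simp
    simp only [key]
    by_cases h : α = α'
    · subst h
      have : ∀ z1 : F, (y2 - x2 - α * (z1 - x1) = α * (y1 - z1)) ↔ y2 - x2 = α * (y1 - x1) := by
        intro z1
        constructor <;> intro h <;> linear_combination h
      simp only [this, if_true, Matrix.smul_apply, auxC, Matrix.of_apply]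
      simp
    · have h' : α - α' ≠ 0 := sub_ne_zero.mpr h
      simp only [Option.some.injEq, h, if_false, allOnes, Matrix.of_apply]
      refine sum_ite_lin _ ((y2 - x2 + α * x1 - α' * y1) / (α - α')) fun z => ?_
      rw [eq_div_iff h']
      constructor <;> intro h <;> linear_combination -h

lemma auxC_sum : ∑ a : Option F, auxC a = allOnes (F × F) + (Fintype.card F : ℝ) • 1 := by
  ext ⟨x1, x2⟩ ⟨y1, y2⟩
  rw [Fintype.sum_option, Matrix.add_apply, Matrix.sum_apply]
  simp only [auxC, allOnes, Matrix.of_apply, Matrix.add_apply, Matrix.smul_apply, Matrix.one_apply,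
    Prod.mk.injEq, smul_eq_mul]
  by_cases h1 : x1 = y1
  · subst h1
    by_cases h2 : x2 = y2
    · subst h2; simp
    · have : y2 - x2 ≠ 0 := sub_ne_zero.mpr (Ne.symm h2)
      simp [h2, this]
  · have : y1 - x1 ≠ 0 := sub_ne_zero.mpr (Ne.symm h1)
    simp only [h1, if_false, false_and, mul_zero, zero_add, add_zero]
    refine sum_ite_lin _ ((y2 - x2) / (y1 - x1)) fun z => ?_
    rw [eq_div_iff this, eq_comm]

lemma allOnes_mul_auxC (a : Option F) :
    allOnes (F × F) * auxC a = (Fintype.card F : ℝ) • allOnes (F × F) := by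
  ext ⟨x1, x2⟩ ⟨y1, y2⟩
  rw [Matrix.mul_apply, Fintype.sum_prod_type]
  rcases a with _ | α
  · simp only [auxC, allOnes, Matrix.of_apply, Matrix.smul_apply, one_mul]
    rw [Finset.sum_eq_single y1]
    · simp
    · intro b _ hb; simp [hb]
    · simp
  · simp only [auxC, allOnes, Matrix.of_apply, Matrix.smul_apply, one_mul]
    rw [Finset.sum_congr rfl (fun z1 _ => sum_ite_lin _ (y2 - α * (y1 - z1)) fun z => ?_)]
    · simp
    · constructor <;> intro h <;> linear_combination -h

lemma auxC_transpose (a : Option F) : (auxC a)ᵀ = auxC a := by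
  ext x y; exact auxC_symm a y x

lemma allOnes_transpose (n : Type*) : (allOnes n)ᵀ = allOnes n := rfl

lemma auxC_mul_allOnes (a : Option F) :
    auxC a * allOnes (F × F) = (Fintype.card F : ℝ) • allOnes (F × F) := by
  have := congrArg Matrix.transpose (allOnes_mul_auxC a)
  simpa [Matrix.transpose_mul, auxC_transpose, allOnes_transpose] using this

/-- Blocks of `NN`. -/
def EE (ψ : {x : K // x ≠ 0} ≃ Option F) (γ : K) : Matrix (F × F) (F × F) ℝ :=
  if h : γ ≠ 0 then auxC (ψ ⟨γ, h⟩) else 0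

variable (ψ : {x : K // x ≠ 0} ≃ Option F)

lemma EE_zero : EE ψ 0 = 0 := by simp [EE]

lemma EE_ne {γ : K} (h : γ ≠ 0) : EE ψ γ = auxC (ψ ⟨γ, h⟩) := by simp [EE, h]

lemma NN_apply (β a b : K) (x y : F × F) :
    NN ψ β (a, x) (b, y) = EE ψ (β * (-a + b)) x y := by
  rw [NN, Matrix.sum_apply]
  simp only [Matrix.kroneckerMap_apply, permP, Matrix.of_apply, ite_mul, one_mul, zero_mul]
  by_cases h : β * (-a + b) = 0
  · rw [h, EE_zero]
    refine Finset.sum_eq_zero fun γ _ => ?_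
    rw [if_neg (Ne.symm γ.2)]
  · rw [EE_ne ψ h, Finset.sum_eq_single ⟨_, h⟩]
    · simp
    · intro γ _ hγ
      rw [if_neg]
      intro h'; exact hγ (Subtype.ext h'.symm)
    · simp

lemma EE_sum : ∑ γ : K, EE ψ γ = allOnes (F × F) + (Fintype.card F : ℝ) • 1 := by
  rw [← auxC_sum, ← Equiv.sum_comp ψ, ← Finset.sum_erase_add _ _ (Finset.mem_univ (0 : K)),
    EE_zero, add_zero]
  rw [Finset.sum_subtype (Finset.univ.erase (0 : K)) (p := fun x => x ≠ 0) (by simp)]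
  exact Finset.sum_congr rfl fun γ _ => EE_ne ψ γ.2

lemma EE_mul (γ γ' : K) : EE ψ γ * EE ψ γ' =
    allOnes (F × F) - (if γ = 0 then allOnes (F × F) else 0)
     - (if γ' = 0 then allOnes (F × F) else 0)
     + (if γ = 0 then (if γ' = 0 then (2 : ℝ) • allOnes (F × F) else 0) else 0)
     + (if γ = γ' then (Fintype.card F : ℝ) • EE ψ γ - allOnes (F × F) else 0) := by
  by_cases h : γ = 0
  · subst h
    by_cases h' : γ' = 0
    · subst h'
      simp [EE_zero, two_smul]
    · simp [EE_zero, h', Ne.symm h']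
  · by_cases h' : γ' = 0
    · subst h'
      simp [EE_zero, h]
    · rw [EE_ne ψ h, EE_ne ψ h', auxC_mul]
      by_cases e : γ = γ'
      · subst e
        simp [h]
      · simp [h, h', e]

lemma EE_mul_one (γ : K) : EE ψ γ * allOnes (F × F) =
    if γ = 0 then 0 else (Fintype.card F : ℝ) • allOnes (F × F) := by
  by_cases h : γ = 0
  · simp [h, EE_zero]
  · simp [EE_ne ψ h, h, auxC_mul_allOnes]

lemma one_mul_EE (γ : K) : allOnes (F × F) * EE ψ γ =
    if γ = 0 then 0 else (Fintype.card F : ℝ) • allOnes (F × F) := by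
  by_cases h : γ = 0
  · simp [h, EE_zero]
  · simp [EE_ne ψ h, h, allOnes_mul_auxC]

/-- `J ⊗ I`. -/
def DD (F K : Type*) [DecidableEq F] : Matrix (K × (F × F)) (K × (F × F)) ℝ :=
  allOnes K ⊗ₖ (1 : Matrix (F × F) (F × F) ℝ)

/-- `I ⊗ J`. -/
def BB (F K : Type*) [DecidableEq K] : Matrix (K × (F × F)) (K × (F × F)) ℝ :=
  (1 : Matrix K K ℝ) ⊗ₖ allOnes (F × F)

lemma allOnes_mul_self (n : Type*) [Fintype n] :
    allOnes n * allOnes n = (Fintype.card n : ℝ) • allOnes n := by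
  ext i j; simp [Matrix.mul_apply, allOnes]

lemma TT_eq : allOnes (K × (F × F)) = allOnes K ⊗ₖ allOnes (F × F) := by
  ext i j; simp [allOnes]

lemma DD_mul_DD : DD F K * DD F K = (Fintype.card K : ℝ) • DD F K := by
  rw [DD, ← Matrix.mul_kronecker_mul, allOnes_mul_self, mul_one, Matrix.smul_kronecker]

lemma BB_mul_BB : BB F K * BB F K = (Fintype.card (F × F) : ℝ) • BB F K := by
  rw [BB, ← Matrix.mul_kronecker_mul, allOnes_mul_self, mul_one, Matrix.kronecker_smul]

lemma DD_mul_BB : DD F K * BB F K = allOnes (K × (F × F)) := by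
  rw [DD, BB, ← Matrix.mul_kronecker_mul, one_mul, mul_one, TT_eq]

lemma BB_mul_DD : BB F K * DD F K = allOnes (K × (F × F)) := by
  rw [DD, BB, ← Matrix.mul_kronecker_mul, one_mul, mul_one, TT_eq]

lemma block_mul (M N : Matrix (K × (F × F)) (K × (F × F)) ℝ) (a b : K) (x y : F × F)
    (f g : K → Matrix (F × F) (F × F) ℝ)
    (hf : ∀ c z, M (a, x) (c, z) = f c x z) (hg : ∀ c z, N (c, z) (b, y) = g c z y) :
    (M * N) (a, x) (b, y) = (∑ c, f c * g c) x y := by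
  rw [Matrix.mul_apply, Fintype.sum_prod_type, Matrix.sum_apply]
  simp only [Matrix.mul_apply, hf, hg]

lemma DD_apply (a b : K) (x y : F × F) : DD F K (a, x) (b, y) = (1 : Matrix (F × F) (F × F) ℝ) x y := by
  simp [DD, allOnes]

lemma BB_apply (a b : K) (x y : F × F) :
    BB F K (a, x) (b, y) = (if a = b then allOnes (F × F) else 0) x y := by
  by_cases h : a = b <;> simp [BB, allOnes, h]

lemma sum_right {M : Type*} [AddCommMonoid M] (f : K → M) {β : K} (hβ : β ≠ 0) (a : K) :
    ∑ c, f (β * (-a + c)) = ∑ c, f c :=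
  ((Equiv.addLeft (-a)).trans (Equiv.mulLeft₀ β hβ)).sum_comp f

lemma sum_left {M : Type*} [AddCommMonoid M] (f : K → M) {β : K} (hβ : β ≠ 0) (b : K) :
    ∑ c, f (β * (-c + b)) = ∑ c, f c :=
  (((Equiv.neg K).trans (Equiv.addRight b)).trans (Equiv.mulLeft₀ β hβ)).sum_comp f

lemma DD_mul_NN {β : K} (hβ : β ≠ 0) :
    DD F K * NN ψ β = allOnes (K × (F × F)) + (Fintype.card F : ℝ) • DD F K := by
  ext ⟨a, x⟩ ⟨b, y⟩
  rw [block_mul _ _ a b x y (fun _ => 1) (fun c => EE ψ (β * (-c + b)))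
    (fun c z => DD_apply _ _ _ _) (fun c z => NN_apply _ _ _ _ _ _)]
  simp only [one_mul]
  rw [sum_left (EE ψ) hβ, EE_sum]
  simp [DD_apply, allOnes]

lemma NN_mul_DD {β : K} (hβ : β ≠ 0) :
    NN ψ β * DD F K = allOnes (K × (F × F)) + (Fintype.card F : ℝ) • DD F K := by
  ext ⟨a, x⟩ ⟨b, y⟩
  rw [block_mul _ _ a b x y (fun c => EE ψ (β * (-a + c))) (fun _ => 1)
    (fun c z => NN_apply _ _ _ _ _ _) (fun c z => DD_apply _ _ _ _)]
  simp only [mul_one]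
  rw [sum_right (EE ψ) hβ, EE_sum]
  simp [DD_apply, allOnes]

lemma arg_zero {β : K} (hβ : β ≠ 0) (a b : K) : β * (-a + b) = 0 ↔ a = b := by
  rw [mul_eq_zero, or_iff_right hβ, neg_add_eq_zero]

lemma NN_mul_BB {β : K} (hβ : β ≠ 0) :
    NN ψ β * BB F K = (Fintype.card F : ℝ) • (allOnes (K × (F × F)) - BB F K) := by
  ext ⟨a, x⟩ ⟨b, y⟩
  rw [block_mul _ _ a b x y (fun c => EE ψ (β * (-a + c)))
    (fun c => if c = b then allOnes (F × F) else 0)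
    (fun c z => NN_apply _ _ _ _ _ _) (fun c z => BB_apply _ _ _ _)]
  simp only [mul_ite, mul_zero, Finset.sum_ite_eq', Finset.mem_univ, if_true, EE_mul_one,
    arg_zero hβ, Matrix.smul_apply, Matrix.sub_apply, BB_apply]
  by_cases h : a = b <;> simp [h, allOnes]

lemma BB_mul_NN {β : K} (hβ : β ≠ 0) :
    BB F K * NN ψ β = (Fintype.card F : ℝ) • (allOnes (K × (F × F)) - BB F K) := by
  ext ⟨a, x⟩ ⟨b, y⟩
  rw [block_mul _ _ a b x y (fun c => if a = c then allOnes (F × F) else 0)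
    (fun c => EE ψ (β * (-c + b)))
    (fun c z => BB_apply _ _ _ _) (fun c z => NN_apply _ _ _ _ _ _)]
  simp only [ite_mul, zero_mul, Finset.sum_ite_eq, Finset.mem_univ, if_true, one_mul_EE,
    arg_zero hβ, Matrix.smul_apply, Matrix.sub_apply, BB_apply]
  by_cases h : a = b <;> simp [h, allOnes]

lemma NN_mul_block {β β' : K} (hβ : β ≠ 0) (hβ' : β' ≠ 0) (a b : K) :
    ∑ c, EE ψ (β * (-a + c)) * EE ψ (β' * (-c + b)) =
      (Fintype.card K : ℝ) • allOnes (F × F) - (2 : ℝ) • allOnes (F × F)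
      + (if a = b then (2 : ℝ) • allOnes (F × F) else 0)
      + ∑ c, (if β * (-a + c) = β' * (-c + b) then
        (Fintype.card F : ℝ) • EE ψ (β * (-a + c)) - allOnes (F × F) else 0) := by
  simp only [EE_mul, Finset.sum_add_distrib, Finset.sum_sub_distrib, arg_zero hβ, arg_zero hβ']
  simp only [Finset.sum_ite_eq, Finset.sum_ite_eq', Finset.mem_univ, if_true, Finset.sum_const,
    Finset.card_univ, two_smul, Nat.cast_smul_eq_nsmul]
  abel

lemma NN_mul_NN_of_ne (hcard : Fintype.card K = Fintype.card F + 2)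
    {β β' : K} (hβ : β ≠ 0) (hβ' : β' ≠ 0) (h : β + β' ≠ 0) :
    NN ψ β * NN ψ β' = ((Fintype.card F : ℝ) - 1) • allOnes (K × (F × F)) + (2 : ℝ) • BB F K
      + (Fintype.card F : ℝ) • NN ψ (β * β' / (β + β')) := by
  ext ⟨a, x⟩ ⟨b, y⟩
  rw [block_mul _ _ a b x y (fun c => EE ψ (β * (-a + c))) (fun c => EE ψ (β' * (-c + b)))
    (fun c z => NN_apply _ _ _ _ _ _) (fun c z => NN_apply _ _ _ _ _ _), NN_mul_block ψ hβ hβ']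
  have e : ∀ c, β * (-a + c) = β' * (-c + b) ↔ c = (β * a + β' * b) / (β + β') := by
    intro c
    rw [eq_div_iff h]
    constructor <;> intro h <;> linear_combination h
  have e2 : β * (-a + (β * a + β' * b) / (β + β')) = β * β' / (β + β') * (-a + b) := by
    field_simp
    ring
  simp only [e, Finset.sum_ite_eq', Finset.mem_univ, if_true, e2]
  simp only [Matrix.add_apply, Matrix.sub_apply, Matrix.smul_apply, NN_apply, BB_apply, hcard]
  by_cases hab : a = b <;> simp [hab, allOnes] <;> ring

lemma NN_mul_NN_neg (hcard : Fintype.card K = Fintype.card F + 2)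
    {β β' : K} (hβ : β ≠ 0) (hβ' : β' ≠ 0) (h : β + β' = 0) :
    NN ψ β * NN ψ β' = (Fintype.card F : ℝ) • allOnes (K × (F × F))
      + ((Fintype.card F : ℝ) ^ 2) • 1 := by
  ext ⟨a, x⟩ ⟨b, y⟩
  rw [block_mul _ _ a b x y (fun c => EE ψ (β * (-a + c))) (fun c => EE ψ (β' * (-c + b)))
    (fun c z => NN_apply _ _ _ _ _ _) (fun c z => NN_apply _ _ _ _ _ _), NN_mul_block ψ hβ hβ']
  obtain rfl : β' = -β := by linear_combination h
  have e : ∀ c, β * (-a + c) = -β * (-c + b) ↔ a = b := by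
    intro c
    rw [← arg_zero hβ a b]
    constructor <;> intro h <;> linear_combination h
  simp only [e]
  by_cases hab : a = b
  · simp only [hab, if_true, Finset.sum_sub_distrib, ← Finset.smul_sum]
    rw [sum_right (EE ψ) hβ, EE_sum]
    simp [Matrix.one_apply, allOnes, hcard]
    split_ifs <;> ring
  · simp [hab, Matrix.one_apply, allOnes, hcard]

lemma NN_comm (hcard : Fintype.card K = Fintype.card F + 2)
    {β β' : K} (hβ : β ≠ 0) (hβ' : β' ≠ 0) : NN ψ β * NN ψ β' = NN ψ β' * NN ψ β := by
  by_cases h : β + β' = 0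
  · rw [NN_mul_NN_neg ψ hcard hβ hβ' h, NN_mul_NN_neg ψ hcard hβ' hβ (by rw [add_comm, h])]
  · rw [NN_mul_NN_of_ne ψ hcard hβ hβ' h,
      NN_mul_NN_of_ne ψ hcard hβ' hβ (by rwa [add_comm]), mul_comm β, add_comm β]

lemma NN_transpose (β : K) : (NN ψ β)ᵀ = NN ψ (-β) := by
  ext ⟨a, x⟩ ⟨b, y⟩
  rw [Matrix.transpose_apply, NN_apply, NN_apply,
    show -β * (-a + b) = β * (-b + a) by ring]
  by_cases h : β * (-b + a) = 0
  · simp [h, EE_zero]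
  · rw [EE_ne ψ h, auxC_symm]

lemma NN_sum : ∑ β : {x : K // x ≠ 0}, NN ψ (β : K) =
    allOnes (K × (F × F)) - BB F K + (Fintype.card F : ℝ) • DD F K
      - (Fintype.card F : ℝ) • 1 := by
  ext ⟨a, x⟩ ⟨b, y⟩
  rw [Matrix.sum_apply]
  simp only [NN_apply]
  by_cases hab : a = b
  · subst hab
    simp [EE_zero, DD_apply, BB_apply, Matrix.one_apply, allOnes]
  · have hne : -a + b ≠ 0 := by rwa [Ne, neg_add_eq_zero]
    have h1 : ∑ β : {x : K // x ≠ 0}, EE ψ ((β : K) * (-a + b)) = ∑ γ : K, EE ψ γ := by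
      rw [← Equiv.sum_comp (Equiv.mulRight₀ _ hne) (EE ψ),
        ← Finset.sum_erase_add _ _ (Finset.mem_univ (0 : K))]
      have hs : ∑ γ ∈ Finset.univ.erase (0 : K), EE ψ (Equiv.mulRight₀ _ hne γ) =
          ∑ β : {x : K // x ≠ 0}, EE ψ (Equiv.mulRight₀ _ hne (β : K)) :=
        Finset.sum_subtype (Finset.univ.erase (0 : K)) (p := fun x => x ≠ 0) (by simp) _
      rw [hs]
      simp [EE_zero]
    rw [← Matrix.sum_apply, h1, EE_sum]
    simp [DD_apply, BB_apply, Matrix.one_apply, allOnes, hab]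

lemma A1_eq : (allOnes K - 1) ⊗ₖ (1 : Matrix (F × F) (F × F) ℝ) = DD F K - 1 := by
  ext ⟨a, x⟩ ⟨b, y⟩
  simp only [DD, Matrix.kroneckerMap_apply, Matrix.sub_apply, Matrix.one_apply, Prod.mk.injEq,
    allOnes, Matrix.of_apply]
  by_cases h : a = b <;> by_cases h' : x = y <;> simp [h, h']

lemma A2_eq : (1 : Matrix K K ℝ) ⊗ₖ (allOnes (F × F) - 1) = BB F K - 1 := by
  ext ⟨a, x⟩ ⟨b, y⟩
  simp only [BB, Matrix.kroneckerMap_apply, Matrix.sub_apply, Matrix.one_apply, Prod.mk.injEq,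
    allOnes, Matrix.of_apply]
  by_cases h : a = b <;> by_cases h' : x = y <;> simp [h, h']

lemma twinA_0 : twinA ψ (Sum.inl 0) = 1 := by simp [twinA]
lemma twinA_1 : twinA ψ (Sum.inl 1) = DD F K - 1 := by simp [twinA, A1_eq]
lemma twinA_2 : twinA ψ (Sum.inl 2) = BB F K - 1 := by simp [twinA, A2_eq]
lemma twinA_3 (β : {x : K // x ≠ 0}) :
    twinA ψ (Sum.inr β) = NN ψ (β : K) - (DD F K - 1) := by simp [twinA, A1_eq]

lemma twinA_sum :
    (∑ i, twinA ψ i) = allOnes (K × (F × F)) := by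
  rw [Fintype.sum_sum_type, Fin.sum_univ_three]
  simp only [twinA_0, twinA_1, twinA_2, twinA_3, Finset.sum_sub_distrib, NN_sum, Finset.sum_const,
    Finset.card_univ]
  rw [Fintype.card_congr ψ, Fintype.card_option]
  simp only [← Nat.cast_smul_eq_nsmul ℝ]
  push_cast
  module

end helpers

/-- The matrices `A_0, A_1, A_2, A_{3,β}` (`β ∈ K∖{0}`) form a commutative association
scheme with `q+3` classes: they are `(0,1)`-matrices summing to the all-ones matrix,
the family is closed under transposition (`A_0, A_1, A_2` are symmetric and
`A_{3,β}ᵀ = A_{3,−β}`), the product of any two members lies in the linear span of the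
family, and any two members commute. -/
theorem twin_association_scheme {F K : Type*} [Field F] [Fintype F] [DecidableEq F]
    [Field K] [Fintype K] [DecidableEq K]
    (hcard : Fintype.card K = Fintype.card F + 2)
    (ψ : {x : K // x ≠ 0} ≃ Option F) :
    (∀ i p r, twinA ψ i p r = 0 ∨ twinA ψ i p r = 1) ∧
    (∑ i, twinA ψ i) = allOnes (K × (F × F)) ∧
    ((∀ i : Fin 3, (twinA ψ (Sum.inl i))ᵀ = twinA ψ (Sum.inl i)) ∧
      ∀ β : {x : K // x ≠ 0},
        (twinA ψ (Sum.inr β))ᵀ = twinA ψ (Sum.inr ⟨-(β : K), neg_ne_zero.mpr β.2⟩)) ∧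
    (∀ i j, twinA ψ i * twinA ψ j ∈ Submodule.span ℝ (Set.range (twinA ψ))) ∧
    (∀ i j, twinA ψ i * twinA ψ j = twinA ψ j * twinA ψ i) := by
  have hsum := twinA_sum ψ
  refine ⟨?_, hsum, ⟨?_, ?_⟩, ?_, ?_⟩
  · rintro (i | β) ⟨a, x⟩ ⟨b, y⟩
    · rcases fin3 i with rfl | rfl | rfl
      · rw [twinA_0, Matrix.one_apply]
        split_ifs <;> simp
      · rw [twinA_1, Matrix.sub_apply, DD_apply, Matrix.one_apply,
          Matrix.one_apply]
        by_cases h : a = b <;> by_cases h' : x = y <;> simp [h, h']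
      · rw [twinA_2, Matrix.sub_apply, BB_apply, Matrix.one_apply]
        by_cases h : a = b <;> by_cases h' : x = y <;> simp [h, h', allOnes]
    · rw [twinA_3, Matrix.sub_apply, Matrix.sub_apply, NN_apply, DD_apply, Matrix.one_apply,
          Matrix.one_apply]
      by_cases h : a = b
      · simp [h, EE_zero]
      · rw [EE_ne ψ ((arg_zero β.2 a b).not.mpr h)]
        by_cases h' : x = y
        · simp [h, h', auxC_self]
        · simpa [h, h'] using auxC_01 _ x y
  · have hD : (DD F K)ᵀ = DD F K := by
      ext ⟨a, x⟩ ⟨b, y⟩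
      simp [DD_apply, Matrix.one_apply, eq_comm]
    have hB : (BB F K)ᵀ = BB F K := by
      ext ⟨a, x⟩ ⟨b, y⟩
      rw [Matrix.transpose_apply, BB_apply, BB_apply]
      by_cases h : a = b
      · simp [h, allOnes]
      · simp [h, Ne.symm h]
    intro i
    rcases fin3 i with rfl | rfl | rfl
    · rw [twinA_0, Matrix.transpose_one]
    · rw [twinA_1, Matrix.transpose_sub, hD, Matrix.transpose_one]
    · rw [twinA_2, Matrix.transpose_sub, hB, Matrix.transpose_one]
  · have hD : (DD F K)ᵀ = DD F K := by
      ext ⟨a, x⟩ ⟨b, y⟩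
      simp [DD_apply, Matrix.one_apply, eq_comm]
    intro β
    rw [twinA_3, twinA_3, Matrix.transpose_sub, Matrix.transpose_sub, hD, Matrix.transpose_one,
      NN_transpose]
  · set S := Submodule.span ℝ (Set.range (twinA ψ)) with hS
    have hm : ∀ i, twinA ψ i ∈ S := fun i => Submodule.subset_span ⟨i, rfl⟩
    have h1 : (1 : Matrix (K × (F × F)) (K × (F × F)) ℝ) ∈ S := by
      simpa [twinA_0] using hm (Sum.inl 0)
    have hD : DD F K ∈ S := by
      simpa [twinA_1] using S.add_mem (hm (Sum.inl 1)) h1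
    have hB : BB F K ∈ S := by
      simpa [twinA_2] using S.add_mem (hm (Sum.inl 2)) h1
    have hT : allOnes (K × (F × F)) ∈ S := by
      rw [← hsum]; exact S.sum_mem fun i _ => hm i
    have hN : ∀ β : K, β ≠ 0 → NN ψ β ∈ S := by
      intro β hβ
      have := S.add_mem (hm (Sum.inr ⟨β, hβ⟩)) (S.sub_mem hD h1)
      rwa [twinA_3, sub_add_cancel] at this
    have hNN : ∀ β β' : {x : K // x ≠ 0}, NN ψ (β : K) * NN ψ (β' : K) ∈ S := by
      intro β β'
      by_cases h : (β : K) + β' = 0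
      · rw [NN_mul_NN_neg ψ hcard β.2 β'.2 h]
        exact S.add_mem (S.smul_mem _ hT) (S.smul_mem _ h1)
      · rw [NN_mul_NN_of_ne ψ hcard β.2 β'.2 h]
        exact S.add_mem (S.add_mem (S.smul_mem _ hT) (S.smul_mem _ hB))
          (S.smul_mem _ (hN _ (div_ne_zero (mul_ne_zero β.2 β'.2) h)))
    have hND : ∀ β : {x : K // x ≠ 0}, NN ψ (β : K) * DD F K ∈ S := fun β => by
      rw [NN_mul_DD ψ β.2]; exact S.add_mem hT (S.smul_mem _ hD)
    have hDN : ∀ β : {x : K // x ≠ 0}, DD F K * NN ψ (β : K) ∈ S := fun β => by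
      rw [DD_mul_NN ψ β.2]; exact S.add_mem hT (S.smul_mem _ hD)
    have hNB : ∀ β : {x : K // x ≠ 0}, NN ψ (β : K) * BB F K ∈ S := fun β => by
      rw [NN_mul_BB ψ β.2]; exact S.smul_mem _ (S.sub_mem hT hB)
    have hBN : ∀ β : {x : K // x ≠ 0}, BB F K * NN ψ (β : K) ∈ S := fun β => by
      rw [BB_mul_NN ψ β.2]; exact S.smul_mem _ (S.sub_mem hT hB)
    have hDD : DD F K * DD F K ∈ S := by rw [DD_mul_DD]; exact S.smul_mem _ hD
    have hBB : BB F K * BB F K ∈ S := by rw [BB_mul_BB]; exact S.smul_mem _ hB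
    have hDB : DD F K * BB F K ∈ S := by rw [DD_mul_BB]; exact hT
    have hBD : BB F K * DD F K ∈ S := by rw [BB_mul_DD]; exact hT
    have hNm : ∀ β : {x : K // x ≠ 0}, NN ψ (β : K) ∈ S := fun β => hN β β.2
    rintro (i | β) (j | β')
    · rcases fin3 i with rfl | rfl | rfl <;> rcases fin3 j with rfl | rfl | rfl <;>
      simp only [twinA_0, twinA_1, twinA_2, mul_sub,
        sub_mul, mul_one, one_mul] <;>
      repeat (first | with_reducible assumption | refine Submodule.sub_mem _ ?_ ?_)
    · rcases fin3 i with rfl | rfl | rfl <;>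
      simp only [twinA_0, twinA_1, twinA_2, twinA_3,
        mul_sub, sub_mul, mul_one, one_mul] <;>
      repeat (first | with_reducible assumption | with_reducible exact hDN _ | with_reducible exact hBN _ | with_reducible exact hNm _ | refine Submodule.sub_mem _ ?_ ?_)
    · rcases fin3 j with rfl | rfl | rfl <;>
      simp only [twinA_0, twinA_1, twinA_2, twinA_3,
        mul_sub, sub_mul, mul_one, one_mul] <;>
      repeat (first | with_reducible assumption | with_reducible exact hND _ | with_reducible exact hNB _ | with_reducible exact hNm _ | refine Submodule.sub_mem _ ?_ ?_)
    · simp only [twinA_3, mul_sub, sub_mul, mul_one, one_mul]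
      repeat (first | with_reducible assumption | with_reducible exact hNN _ _ | with_reducible exact hND _ | with_reducible exact hDN _ | with_reducible exact hNm _ |
        refine Submodule.sub_mem _ ?_ ?_)
  · have cDB : Commute (DD F K) (BB F K) := by rw [Commute, SemiconjBy, DD_mul_BB, BB_mul_DD]
    have cDN : ∀ β : {x : K // x ≠ 0}, Commute (DD F K) (NN ψ (β : K)) := fun β => by
      rw [Commute, SemiconjBy, DD_mul_NN ψ β.2, NN_mul_DD ψ β.2]
    have cBN : ∀ β : {x : K // x ≠ 0}, Commute (BB F K) (NN ψ (β : K)) := fun β => by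
      rw [Commute, SemiconjBy, BB_mul_NN ψ β.2, NN_mul_BB ψ β.2]
    have cNN : ∀ β β' : {x : K // x ≠ 0}, Commute (NN ψ (β : K)) (NN ψ (β' : K)) :=
      fun β β' => NN_comm ψ hcard β.2 β'.2
    -- each generator commutes with the whole family
    have key : ∀ X : Matrix (K × (F × F)) (K × (F × F)) ℝ, Commute X (DD F K) →
        Commute X (BB F K) → (∀ β : {x : K // x ≠ 0}, Commute X (NN ψ (β : K))) →
        ∀ i, Commute X (twinA ψ i) := by
      intro X hXD hXB hXN
      rintro (i | β)
      · rcases fin3 i with rfl | rfl | rfl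
        · rw [twinA_0]; exact Commute.one_right X
        · rw [twinA_1]; exact hXD.sub_right (Commute.one_right X)
        · rw [twinA_2]; exact hXB.sub_right (Commute.one_right X)
      · rw [twinA_3]; exact (hXN β).sub_right (hXD.sub_right (Commute.one_right X))
    intro i j
    exact key _ (key _ (Commute.refl _) cDB cDN i).symm (key _ cDB.symm (Commute.refl _) cBN i).symm
      (fun β => (key _ (cDN β).symm (cBN β).symm (cNN β) i).symm) j
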